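/- An operator A ∈ 𝒯 is compact if and only if all diagonals of its matrix tend to zero: for every j ∈ ℤ, the matrix entries ⟨A e_n, e_{n+j}⟩ (defined for n ∈ ℕ with n + j ≥ 0) tend to 0 as n → ∞. -/

import Mathlib

/-- `T_{n,m} = Tⁿ (T*)ᵐ` for a bounded operator `T` on a complex Hilbert space. -/
noncomputable def Tnm {H : Type*} [NormedAddCommGroup H] [InnerProductSpace ℂ H]
    [CompleteSpace H] (T : H →L[ℂ] H) (n m : ℕ) : H →L[ℂ] H :=
  T ^ n * (ContinuousLinearMap.adjoint T) ^ m

/-- The Toeplitz algebra: the norm-closed star-subalgebra of `B(H)` generated by `T`. -/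
noncomputable def ToeplitzAlg {H : Type*} [NormedAddCommGroup H] [InnerProductSpace ℂ H]
    [CompleteSpace H] (T : H →L[ℂ] H) : StarSubalgebra ℂ (H →L[ℂ] H) :=
  StarAlgebra.elemental ℂ T

/-- The `k`-th Fourier coefficient `A_k = (1/2π) ∫₀^{2π} e^{-ikθ} U_θ A U_θ* dθ`
(a Bochner integral in `B(H)`). -/
noncomputable def opFourierCoeff {H : Type*} [NormedAddCommGroup H] [InnerProductSpace ℂ H]
    [CompleteSpace H] (U : ℝ → H →L[ℂ] H) (A : H →L[ℂ] H) (k : ℤ) : H →L[ℂ] H :=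
  (2 * Real.pi)⁻¹ • ∫ θ in (0 : ℝ)..(2 * Real.pi),
    Complex.exp (-(k : ℂ) * θ * Complex.I) • (U θ * A * ContinuousLinearMap.adjoint (U θ))

open scoped ComplexInnerProductSpace

section Monoid

variable {M : Type*} [Monoid M] {s t : M}

/-- If `s` is a left inverse of `t`, every word in `t` and `s` reduces to some `t ^ a * s ^ b`. -/
lemma exists_eq_pow_mul_pow_of_mem_closure (h : s * t = 1) {x : M}
    (hx : x ∈ Submonoid.closure ({t, s} : Set M)) : ∃ a b : ℕ, x = t ^ a * s ^ b := by
  induction hx using Submonoid.closure_induction_right with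
  | one => exact ⟨0, 0, by simp⟩
  | mul_right x hx y hy ih =>
    obtain ⟨a, b, rfl⟩ := ih
    rcases hy with rfl | rfl
    · rcases b with _ | b
      · exact ⟨a + 1, 0, by simp [pow_succ]⟩
      · exact ⟨a, b, by rw [pow_succ, mul_assoc, mul_assoc, h, mul_one]⟩
    · exact ⟨a, b + 1, by rw [pow_succ, mul_assoc]⟩

lemma pow_mul_pow_mul_pow_mul_pow_of_le (h : s * t = 1) (a : ℕ) {b n : ℕ} (hn : b ≤ n) :
    s ^ n * (t ^ a * s ^ b) * t ^ n = s ^ b * t ^ a := by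
  obtain ⟨k, rfl⟩ := Nat.exists_eq_add_of_le hn
  calc s ^ (b + k) * (t ^ a * s ^ b) * t ^ (b + k)
      = s ^ (b + k) * t ^ a * (s ^ b * t ^ b) * t ^ k := by
        rw [pow_add t]; simp only [mul_assoc]
    _ = s ^ b * (s ^ k * t ^ k) * t ^ a := by
        rw [pow_mul_pow_eq_one b h, mul_one, mul_assoc, ← pow_add, add_comm a k, pow_add s,
          pow_add t]
        simp only [mul_assoc]
    _ = s ^ b * t ^ a := by rw [pow_mul_pow_eq_one k h, mul_one]

end Monoid

section BoundedOperators

variable {H : Type*} [NormedAddCommGroup H] [InnerProductSpace ℂ H]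

lemma HilbertBasis.clm_ext {ι : Type*} (e : HilbertBasis ι ℂ H) {A B : H →L[ℂ] H}
    (h : ∀ i j, ⟪e i, A (e j)⟫ = ⟪e i, B (e j)⟫) : A = B := by
  refine ContinuousLinearMap.ext_on
    (Submodule.dense_iff_topologicalClosure_eq_top.mpr e.dense_span) ?_
  rintro _ ⟨j, rfl⟩
  apply e.repr.injective
  ext i
  simpa [HilbertBasis.repr_apply_apply] using h i j

/-- Compact operators map an orthonormal sequence to a sequence converging to zero in norm. -/
lemma IsCompactOperator.tendsto_orthonormal [CompleteSpace H] {A : H →L[ℂ] H}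
    (hA : IsCompactOperator A) {v : ℕ → H} (hv : Orthonormal ℂ v) :
    Filter.Tendsto (fun n => A (v n)) Filter.atTop (nhds 0) := by
  have hK : IsCompact (closure (A '' Metric.closedBall 0 1)) :=
    hA.isCompact_closure_image_closedBall (f := (A : H →ₗ[ℂ] H)) 1
  refine hK.tendsto_nhds_of_unique_mapClusterPt
    (.of_forall fun n => subset_closure ⟨v n, by simp [hv.1 n], rfl⟩) fun y _ hy => ?_
  have hweak : Filter.Tendsto (fun n => ⟪y, A (v n)⟫) Filter.atTop (nhds 0) := by
    rw [tendsto_zero_iff_norm_tendsto_zero]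
    have h := (hv.inner_products_summable (ContinuousLinearMap.adjoint A y)).tendsto_atTop_zero
    simpa [Real.sqrt_sq, ContinuousLinearMap.adjoint_inner_right, norm_inner_symm] using h.sqrt
  have hcl : MapClusterPt ⟪y, y⟫ Filter.atTop (fun n => ⟪y, A (v n)⟫) :=
    hy.continuousAt_comp (f := fun z => ⟪y, z⟫) (by fun_prop)
  have : ⟪y, y⟫ = 0 := by
    obtain ⟨φ, hφ, hlim⟩ := hcl.tendsto_subseq
    exact tendsto_nhds_unique hlim (hweak.comp hφ.tendsto_atTop)
  exact inner_self_eq_zero.mp this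

lemma isCompactOperator_mul_mul {K : H →L[ℂ] H} (hK : IsCompactOperator K) (A B : H →L[ℂ] H) :
    IsCompactOperator (A * K * B : H →L[ℂ] H) :=
  (hK.clm_comp A).comp_clm B

/-- For contractions `S` and `T`, the operators `A` with `Sⁿ A Tⁿ` Cauchy form a closed set. -/
lemma isClosed_setOf_cauchySeq_mul_mul {S T : H →L[ℂ] H} (hS : ‖S‖ ≤ 1) (hT : ‖T‖ ≤ 1) :
    IsClosed {A : H →L[ℂ] H | CauchySeq fun n : ℕ => S ^ n * A * T ^ n} := by
  have hpow : ∀ {R : H →L[ℂ] H}, ‖R‖ ≤ 1 → ∀ n : ℕ, ‖R ^ n‖ ≤ 1 := fun {R} hR n => by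
    induction n with
    | zero => exact ContinuousLinearMap.norm_id_le
    | succ n ih =>
      rw [pow_succ]
      exact (norm_mul_le _ _).trans (mul_le_one₀ ih (norm_nonneg _) hR)
  have hle : ∀ (n : ℕ) (A : H →L[ℂ] H), ‖S ^ n * A * T ^ n‖ ≤ ‖A‖ := fun n A =>
    calc ‖S ^ n * A * T ^ n‖ ≤ ‖S ^ n‖ * ‖A‖ * ‖T ^ n‖ := norm_mul₃_le
      _ ≤ 1 * ‖A‖ * 1 := by gcongr <;> exact hpow ‹_› n
      _ = ‖A‖ := by ring
  have hdist : ∀ (n : ℕ) (A B : H →L[ℂ] H),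
      dist (S ^ n * A * T ^ n) (S ^ n * B * T ^ n) ≤ dist A B := fun n A B => by
    rw [dist_eq_norm, dist_eq_norm, ← sub_mul, ← mul_sub]
    exact hle n _
  refine isClosed_of_closure_subset fun A hA => Metric.cauchySeq_iff.mpr fun ε hε => ?_
  obtain ⟨B, hB, hAB⟩ := Metric.mem_closure_iff.mp hA (ε / 3) (by positivity)
  obtain ⟨N, hN⟩ := Metric.cauchySeq_iff.mp hB (ε / 3) (by positivity)
  refine ⟨N, fun m hm n hn => ?_⟩
  have h₁ := hdist m A B
  have h₂ := hdist n B A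
  have h₃ := hN m hm n hn
  have h₄ := dist_triangle4 (S ^ m * A * T ^ m) (S ^ m * B * T ^ m) (S ^ n * B * T ^ n)
    (S ^ n * A * T ^ n)
  rw [dist_comm B A] at h₂
  linarith

end BoundedOperators

section Toeplitz

variable {H : Type*} [NormedAddCommGroup H] [InnerProductSpace ℂ H] [CompleteSpace H]
  {T : H →L[ℂ] H}

/-- A property of operators that is closed, linear and holds at all `Tⁿ (T*)ᵐ` holds on the
whole Toeplitz algebra of an isometry `T`. -/
lemma ToeplitzAlg.induction (hT : star T * T = 1) {V : Submodule ℂ (H →L[ℂ] H)}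
    (hV : IsClosed (V : Set (H →L[ℂ] H))) (hmem : ∀ a b : ℕ, T ^ a * star T ^ b ∈ V)
    {A : H →L[ℂ] H} (hA : A ∈ ToeplitzAlg T) : A ∈ V := by
  have hadj : ∀ B ∈ StarAlgebra.adjoin ℂ ({T} : Set (H →L[ℂ] H)), B ∈ V := by
    intro B hB
    have hB' : B ∈ Submodule.span ℂ
        (Submonoid.closure ({T} ∪ star {T} : Set (H →L[ℂ] H)) : Set (H →L[ℂ] H)) := by
      rw [← StarAlgebra.adjoin_eq_span]
      exact hB
    refine Submodule.span_le.mpr ?_ hB'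
    intro C hC
    rw [Set.star_singleton, Set.singleton_union] at hC
    obtain ⟨a, b, rfl⟩ := exists_eq_pow_mul_pow_of_mem_closure hT hC
    exact hmem a b
  exact closure_minimal (s := (StarAlgebra.adjoin ℂ ({T} : Set (H →L[ℂ] H)) : Set (H →L[ℂ] H)))
    hadj hV hA

/-- On the Toeplitz algebra of an isometry `T`, the compressions `(T*)ⁿ A Tⁿ` converge in norm. -/
lemma ToeplitzAlg.cauchySeq (hT : star T * T = 1) {A : H →L[ℂ] H} (hA : A ∈ ToeplitzAlg T) :
    CauchySeq fun n : ℕ => star T ^ n * A * T ^ n := by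
  have hnorm : ‖T‖ ≤ 1 := by
    have h : ‖T‖ * ‖T‖ ≤ 1 := by
      rw [← CStarRing.norm_star_mul_self, hT]
      exact ContinuousLinearMap.norm_id_le
    nlinarith [norm_nonneg T]
  let V : Submodule ℂ (H →L[ℂ] H) :=
    { carrier := {A | CauchySeq fun n : ℕ => star T ^ n * A * T ^ n}
      zero_mem' := by simpa using cauchySeq_const (0 : H →L[ℂ] H)
      add_mem' := fun {A B} hA hB => by
        change CauchySeq fun n : ℕ => star T ^ n * (A + B) * T ^ n
        simp only [mul_add, add_mul]
        exact CauchySeq.add hA hB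
      smul_mem' := fun c A hA => by
        change CauchySeq fun n : ℕ => star T ^ n * (c • A) * T ^ n
        simp only [mul_smul_comm, smul_mul_assoc]
        exact (uniformContinuous_const_smul c).comp_cauchySeq hA }
  refine ToeplitzAlg.induction (V := V) hT
    (isClosed_setOf_cauchySeq_mul_mul ((norm_star T).trans_le hnorm) hnorm) (fun a b => ?_) hA
  refine (tendsto_atTop_of_eventually_const (i₀ := b) fun n hn => ?_).cauchySeq
    (x := star T ^ b * T ^ a)
  exact pow_mul_pow_mul_pow_mul_pow_of_le hT a hn

/-- If `T` is an isometry with `T T* - 1` compact, every operator in its Toeplitz algebra agrees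
with its compression `T* A T` up to a compact operator. -/
lemma ToeplitzAlg.isCompactOperator_sub (hT : star T * T = 1)
    (hc : IsCompactOperator (T * star T - 1 : H →L[ℂ] H)) {A : H →L[ℂ] H}
    (hA : A ∈ ToeplitzAlg T) : IsCompactOperator (A - star T * A * T : H →L[ℂ] H) := by
  let D : (H →L[ℂ] H) →ₗ[ℂ] (H →L[ℂ] H) :=
    LinearMap.id - LinearMap.mulRight ℂ T ∘ₗ LinearMap.mulLeft ℂ (star T)
  have hD : Continuous D := by
    change Continuous fun A : H →L[ℂ] H => A - star T * A * T
    fun_prop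
  refine ToeplitzAlg.induction (V := (compactOperator (RingHom.id ℂ) H H).comap D) hT
    (isClosed_setOfPred_isCompactOperator.preimage hD) (fun a b => ?_) hA
  change IsCompactOperator
    (T ^ a * star T ^ b - star T * (T ^ a * star T ^ b) * T : H →L[ℂ] H)
  have hzero : IsCompactOperator (0 : H →L[ℂ] H) := isCompactOperator_zero
  rcases a with _ | a
  · rwa [pow_zero, one_mul, ← pow_succ', pow_succ, mul_assoc, hT, mul_one, sub_self]
  rcases b with _ | b
  · rwa [pow_zero, mul_one, pow_succ', ← mul_assoc, hT, one_mul, ← pow_succ, ← pow_succ',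
      sub_self]
  have hcomp : star T * (T ^ (a + 1) * star T ^ (b + 1)) * T = T ^ a * star T ^ b := by
    calc star T * (T ^ (a + 1) * star T ^ (b + 1)) * T
        = (star T * T) * T ^ a * (star T ^ b * (star T * T)) := by
          rw [pow_succ', pow_succ]; simp only [mul_assoc]
      _ = T ^ a * star T ^ b := by rw [hT, one_mul, mul_one]
  have hfactor : T ^ (a + 1) * star T ^ (b + 1) - T ^ a * star T ^ b
      = T ^ a * (T * star T - 1) * star T ^ b := by
    rw [pow_succ, pow_succ', mul_sub, sub_mul, mul_one]
    simp only [mul_assoc]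
  rw [hcomp, hfactor]
  exact isCompactOperator_mul_mul hc _ _

lemma ToeplitzAlg.isCompactOperator_sub_pow (hT : star T * T = 1)
    (hc : IsCompactOperator (T * star T - 1 : H →L[ℂ] H)) {A : H →L[ℂ] H}
    (hA : A ∈ ToeplitzAlg T) (n : ℕ) :
    IsCompactOperator (A - star T ^ n * A * T ^ n : H →L[ℂ] H) := by
  induction n with
  | zero => simpa using (isCompactOperator_zero : IsCompactOperator (0 : H → H))
  | succ n ih =>
    have h : A - star T ^ (n + 1) * A * T ^ (n + 1)
        = (A - star T ^ n * A * T ^ n) + star T ^ n * (A - star T * A * T) * T ^ n := by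
      rw [pow_succ, pow_succ', mul_sub, sub_mul]
      simp only [mul_assoc]
      abel
    rw [h]
    exact ih.add (isCompactOperator_mul_mul (ToeplitzAlg.isCompactOperator_sub hT hc hA) _ _)

end Toeplitz

section Shift

variable {H : Type*} [NormedAddCommGroup H] [InnerProductSpace ℂ H]
  {e : HilbertBasis ℕ ℂ H} {T : H →L[ℂ] H}

lemma shift_pow_apply (hT : ∀ n : ℕ, T (e n) = e (n + 1)) (n k : ℕ) :
    (T ^ n) (e k) = e (k + n) := by
  induction n with
  | zero => simp
  | succ n ih => rw [pow_succ', mul_apply_eq_comp, ih, hT, add_assoc]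

lemma star_shift_mul_shift [CompleteSpace H] (hT : ∀ n : ℕ, T (e n) = e (n + 1)) :
    star T * T = 1 := by
  refine e.clm_ext fun i j => ?_
  rw [mul_apply_eq_comp, ContinuousLinearMap.star_eq_adjoint,
    ContinuousLinearMap.adjoint_inner_right, hT, hT, one_apply_eq_self]
  simp [orthonormal_iff_ite.mp e.orthonormal]

lemma isCompactOperator_shift_mul_star_shift_sub_one [CompleteSpace H]
    (hT : ∀ n : ℕ, T (e n) = e (n + 1)) :
    IsCompactOperator (T * star T - 1 : H →L[ℂ] H) := by
  have hrank : T * star T - 1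
      = (ContinuousLinearMap.toSpanSingleton ℂ (-e 0)).comp (innerSL ℂ (e 0)) := by
    refine ContinuousLinearMap.ext_on
      (Submodule.dense_iff_topologicalClosure_eq_top.mpr e.dense_span) ?_
    rintro _ ⟨j, rfl⟩
    rcases j with _ | j
    · have hzero : star T (e 0) = 0 := by
        apply e.repr.injective
        ext i
        simp [HilbertBasis.repr_apply_apply, ContinuousLinearMap.star_eq_adjoint,
          ContinuousLinearMap.adjoint_inner_right, hT, orthonormal_iff_ite.mp e.orthonormal]
      simp [hzero, e.orthonormal.1 0]
    · have hstar : star T (e (j + 1)) = e j := by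
        rw [← hT, ← mul_apply_eq_comp, star_shift_mul_shift hT,
          one_apply_eq_self]
      simp [hstar, hT, orthonormal_iff_ite.mp e.orthonormal]
  have hspan : IsCompactOperator (ContinuousLinearMap.toSpanSingleton ℂ (-e 0)) :=
    isCompactOperator_of_locallyCompactSpace_rng _
  rw [hrank]
  exact hspan.comp_clm (innerSL ℂ (e 0))

end Shift

/-- `A ∈ 𝒯` is compact iff every diagonal of its matrix tends to zero:
for each `j ∈ ℤ` the entries `⟨A e_n, e_{n+j}⟩` tend to `0` as `n → ∞`. -/
theorem toeplitz_compact_iff_diagonals {H : Type*} [NormedAddCommGroup H]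
    [InnerProductSpace ℂ H] [CompleteSpace H] (e : HilbertBasis ℕ ℂ H) (T : H →L[ℂ] H)
    (hT : ∀ n : ℕ, T (e n) = e (n + 1))
    (A : H →L[ℂ] H) (hA : A ∈ ToeplitzAlg T) :
    IsCompactOperator (⇑A) ↔
      ∀ j : ℤ, Filter.Tendsto (fun n : ℕ => ⟪e (((n : ℤ) + j).toNat), A (e n)⟫)
        Filter.atTop (nhds 0) := by
  constructor
  · intro hcompact j
    refine squeeze_zero_norm (fun n => ?_)
      (tendsto_zero_iff_norm_tendsto_zero.mp (hcompact.tendsto_orthonormal e.orthonormal))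
    simpa [e.orthonormal.1] using norm_inner_le_norm (𝕜 := ℂ) (e ((n : ℤ) + j).toNat) (A (e n))
  · intro hdiag
    have hiso := star_shift_mul_shift hT
    obtain ⟨B, hB⟩ := cauchySeq_tendsto_of_complete (ToeplitzAlg.cauchySeq hiso hA)
    have hzero : B = 0 := by
      refine e.clm_ext fun i j => ?_
      have hentry : Filter.Tendsto (fun n : ℕ => ⟪e i, (star T ^ n * A * T ^ n) (e j)⟫)
          Filter.atTop (nhds ⟪e i, B (e j)⟫) :=
        tendsto_const_nhds.inner
          (((ContinuousLinearMap.apply ℂ H (e j)).continuous.tendsto B).comp hB)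
      have hlim := (hdiag ((i : ℤ) - j)).comp (Filter.tendsto_add_atTop_nat j)
      rw [zero_apply, inner_zero_right]
      refine tendsto_nhds_unique (hentry.congr fun n => ?_) hlim
      have hindex : (((n + j : ℕ) : ℤ) + ((i : ℤ) - j)).toNat = i + n := by lia
      rw [Function.comp_apply, hindex, mul_apply_eq_comp,
        mul_apply_eq_comp, ← star_pow, ContinuousLinearMap.star_eq_adjoint,
        ContinuousLinearMap.adjoint_inner_right, shift_pow_apply hT, shift_pow_apply hT,
        add_comm j n]
    have hsub := tendsto_const_nhds (x := A).sub hB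
    rw [hzero, sub_zero] at hsub
    exact isCompactOperator_of_tendsto hsub (.of_forall
      (ToeplitzAlg.isCompactOperator_sub_pow hiso
        (isCompactOperator_shift_mul_star_shift_sub_one hT) hA))
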